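/- arXiv:2604.26061 — 4 statements merged into one kernel-verified Lean document; each statement's English description precedes it below -/
import Mathlib

section
/- Let a, b, c, d ∈ ℂ with D := ad − bc ≠ 0 and d ≠ 0, and let n ≥ 2 be an integer. Define G(w) = (−d·w + b)^n · (c·w − a)^{2−n} / D, where the exponent 2 − n is an integer power (note c·(b/d) − a = −D/d ≠ 0, so G is analytic in a neighborhood of b/d). Then the iterated derivatives of G at b/d satisfy G^{(k)}(b/d) = 0 for all 0 ≤ k ≤ n − 1, and G^{(n)}(b/d) = n! · d^{2(n−1)} / D^{n−1}. -/
/-!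
Write `-dw + b = -d (w - b/d)`. Near `w₀ = b/d` the function is `(w - w₀)ⁿ h(w)` with
`h(w) = (-d)ⁿ (cw - a)^(2-n) / (ad - bc)` smooth at `w₀`, because `c w₀ - a = -(ad - bc)/d ≠ 0`.
In the Leibniz formula only the `n`-th derivative of `(w - w₀)ⁿ` survives at `w₀`
(`iteratedDeriv_sub_pow_self`), so the derivatives of order below `n` vanish and the `n`-th
one is `n! h(w₀)`.
-/

lemma iteratedDeriv_sub_pow_self (w₀ : ℂ) (n k : ℕ) :
    iteratedDeriv k (fun w : ℂ => (w - w₀) ^ n) w₀ = if k = n then (n.factorial : ℂ) else 0 := by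
  have h := congrFun (iteratedDeriv_comp_sub_const k (fun w : ℂ => w ^ n) w₀) w₀
  rw [h, sub_self, iteratedDeriv_fun_pow_zero]
  split_ifs <;> simp_all

/-- Leibniz's rule with a factor vanishing to order `n`: derivatives of order `k < n` vanish at
`w₀`, and for `k = n` only the term with all derivatives on `(w - w₀)ⁿ` survives. -/
lemma iteratedDeriv_sub_pow_mul (w₀ : ℂ) (n k : ℕ) (hk : k ≤ n) (h : ℂ → ℂ)
    (hh : ContDiffAt ℂ k h w₀) :
    iteratedDeriv k (fun w : ℂ => (w - w₀) ^ n * h w) w₀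
      = if k = n then (n.factorial : ℂ) * h w₀ else 0 := by
  have hf : ContDiffAt ℂ k (fun w : ℂ => (w - w₀) ^ n) w₀ := by fun_prop
  have e := iteratedDeriv_mul hf hh
  rw [show (fun w : ℂ => (w - w₀) ^ n * h w) = (fun w : ℂ => (w - w₀) ^ n) * h from rfl, e]
  simp only [iteratedDeriv_sub_pow_self]
  split_ifs with hkn
  · subst hkn
    rw [Finset.sum_range_succ, Finset.sum_eq_zero]
    · simp
    · intro i hi
      simp [(Finset.mem_range.1 hi).ne]
  · refine Finset.sum_eq_zero fun i hi => ?_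
    have : i ≠ n := by have := Finset.mem_range.1 hi; omega
    simp [this]

/-- The pushforward `G(w) = (-dw+b)^n (cw-a)^(2-n) / (ad-bc)` of `z ↦ zⁿ`
(`n ≥ 2`) under the Möbius transformation `φ(z) = (az+b)/(cz+d)` has a zero of
order `n` at `φ(0) = b/d` with leading coefficient `n! d^(2(n-1)) / (ad-bc)^(n-1)`. -/
theorem mobius_pushforward_monomial (a b c d : ℂ)
    (hD : a * d - b * c ≠ 0) (hd : d ≠ 0) (n : ℕ) (hn : 2 ≤ n) :
    (∀ k : ℕ, k ≤ n - 1 →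
      iteratedDeriv k
        (fun w : ℂ => (-d * w + b) ^ n * (c * w - a) ^ ((2 : ℤ) - (n : ℤ)) / (a * d - b * c))
        (b / d) = 0) ∧
    iteratedDeriv n
        (fun w : ℂ => (-d * w + b) ^ n * (c * w - a) ^ ((2 : ℤ) - (n : ℤ)) / (a * d - b * c))
        (b / d)
      = (n.factorial : ℂ) * d ^ (2 * (n - 1)) / (a * d - b * c) ^ (n - 1) := by
  have hw : c * (b / d) - a = -(a * d - b * c) / d := by field_simp; ring
  have hw0 : c * (b / d) - a ≠ 0 := by
    rw [hw]; exact div_ne_zero (neg_ne_zero.2 hD) hd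
  have hG : (fun w : ℂ => (-d * w + b) ^ n * (c * w - a) ^ ((2 : ℤ) - (n : ℤ)) / (a * d - b * c))
      = fun w : ℂ => (w - b / d) ^ n *
        ((-d) ^ n * (c * w - a) ^ ((2 : ℤ) - (n : ℤ)) / (a * d - b * c)) := by
    funext w
    rw [show -d * w + b = (w - b / d) * (-d) by field_simp; ring, mul_pow]
    ring
  have hh (k : ℕ) : ContDiffAt ℂ k
      (fun w : ℂ => (-d) ^ n * (c * w - a) ^ ((2 : ℤ) - (n : ℤ)) / (a * d - b * c)) (b / d) := by
    have hlin : AnalyticAt ℂ (fun w : ℂ => c * w - a) (b / d) := by fun_prop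
    exact ((analyticAt_const.mul (hlin.fun_zpow hw0)).div analyticAt_const hD).contDiffAt
  rw [hG]
  refine ⟨fun k hk => ?_, ?_⟩
  · rw [iteratedDeriv_sub_pow_mul _ _ _ (by omega) _ (hh k), if_neg (by omega)]
  · rw [iteratedDeriv_sub_pow_mul _ _ _ le_rfl _ (hh n), if_pos rfl, hw]
    -- With `n = m + 2` the exponent `2 - n` is `-m`; the signs `(-1)^n` and `(-1)^m` cancel.
    obtain ⟨m, rfl⟩ := Nat.exists_eq_add_of_le hn
    rw [show (2 : ℤ) - ((2 + m : ℕ) : ℤ) = -(m : ℤ) by push_cast; ring,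
      show 2 + m - 1 = m + 1 by omega, zpow_neg, zpow_natCast, neg_div, neg_pow (_ / d),
      neg_pow d, div_pow]
    have hs : (-1 : ℂ) ^ m ≠ 0 := by simp
    field_simp
    ring
end

section
/- Let m ≥ 1 and let P be a nonzero polynomial in two real variables of total degree at most m. Let a, b, c, e ∈ ℂ with ae − bc ≠ 0 and φ(z) = (az + b)/(cz + e). Then there exists a nonzero polynomial Q in two real variables of total degree at most 2m such that for every z ∈ ℂ with c·z + e ≠ 0, if P(Re z, Im z) = 0 then Q(Re φ(z), Im φ(z)) = 0. -/
/-!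
With `w = φ z` the inverse transformation gives `z = (e w - b) / (a - c w)`, so in real coordinates
`Re z = U(w) / N(w)` and `Im z = V(w) / N(w)`, where `U + i V = (e w - b) * conj (a - c w)` and
`N = |a - c w|²` are real polynomials of degree at most `2`. Clearing denominators,
`Q = N ^ m * P(U / N, V / N)` is a polynomial of degree at most `2 * m` with
`Q(w) = N(w) ^ m * P(z)`; this gives the inclusion of zero sets.

For `Q ≠ 0`: on the image of `φ` we have `a - c w = (a e - b c) / (c z + e) ≠ 0`, so `Q = 0` would
force `P` to vanish wherever `c z + e ≠ 0`. Then `P * |c z + e|²` vanishes on the whole plane, hence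
is the zero polynomial, although neither factor is.
-/

namespace MobiusCurve

open MvPolynomial

/-- The affine polynomial `p x + q y + r` on the plane. -/
noncomputable def lin (p q r : ℝ) : MvPolynomial (Fin 2) ℝ := C p * X 0 + C q * X 1 + C r

lemma eval_lin (p q r x y : ℝ) : eval ![x, y] (lin p q r) = p * x + q * y + r := by
  simp [lin]

lemma totalDegree_lin (p q r : ℝ) : (lin p q r).totalDegree ≤ 1 := by
  have h (s : ℝ) (i : Fin 2) : (C s * X i : MvPolynomial (Fin 2) ℝ).totalDegree ≤ 1 :=
    (totalDegree_mul _ _).trans (by simp)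
  refine (totalDegree_add _ _).trans (max_le ((totalDegree_add _ _).trans ?_) (by simp))
  exact max_le (h p 0) (h q 1)

lemma totalDegree_lin_mul (p q r p' q' r' : ℝ) :
    (lin p q r * lin p' q' r').totalDegree ≤ 2 :=
  (totalDegree_mul _ _).trans (add_le_add (totalDegree_lin _ _ _) (totalDegree_lin _ _ _))

/-- `N ^ m * P(U / N, V / N)`, written without denominators; this is the intended meaning when
`P` has total degree at most `m`, so that the truncated exponents are genuine differences. -/
noncomputable def clearDenom (m : ℕ) (P U V N : MvPolynomial (Fin 2) ℝ) :
    MvPolynomial (Fin 2) ℝ :=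
  ∑ d ∈ P.support, C (coeff d P) * (U ^ d 0 * V ^ d 1 * N ^ (m - (d 0 + d 1)))

lemma exponent_le {m : ℕ} {P : MvPolynomial (Fin 2) ℝ} (hdeg : P.totalDegree ≤ m)
    {d : Fin 2 →₀ ℕ} (hd : d ∈ P.support) : d 0 + d 1 ≤ m := by
  have h := (le_totalDegree hd).trans hdeg
  rwa [Finsupp.sum_fintype _ _ (fun _ => rfl), Fin.sum_univ_two] at h

lemma totalDegree_clearDenom {m : ℕ} {P U V N : MvPolynomial (Fin 2) ℝ}
    (hdeg : P.totalDegree ≤ m) (hU : U.totalDegree ≤ 2) (hV : V.totalDegree ≤ 2)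
    (hN : N.totalDegree ≤ 2) : (clearDenom m P U V N).totalDegree ≤ 2 * m := by
  refine totalDegree_finsetSum_le fun d hd => ?_
  have hdm := exponent_le hdeg hd
  have pw (A : MvPolynomial (Fin 2) ℝ) (hA : A.totalDegree ≤ 2) (k : ℕ) :
      (A ^ k).totalDegree ≤ k * 2 :=
    (totalDegree_pow _ _).trans (Nat.mul_le_mul_left k hA)
  have h1 := totalDegree_mul (C (coeff d P)) (U ^ d 0 * V ^ d 1 * N ^ (m - (d 0 + d 1)))
  have h2 := totalDegree_mul (U ^ d 0 * V ^ d 1) (N ^ (m - (d 0 + d 1)))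
  have h3 := totalDegree_mul (U ^ d 0) (V ^ d 1)
  have h4 := pw U hU (d 0)
  have h5 := pw V hV (d 1)
  have h6 := pw N hN (m - (d 0 + d 1))
  rw [totalDegree_C] at h1
  omega

lemma eval_clearDenom {m : ℕ} {P U V N : MvPolynomial (Fin 2) ℝ} (hdeg : P.totalDegree ≤ m)
    (v : Fin 2 → ℝ) (x y : ℝ) (hU : eval v U = eval v N * x) (hV : eval v V = eval v N * y) :
    eval v (clearDenom m P U V N) = eval v N ^ m * eval ![x, y] P := by
  rw [clearDenom, map_sum, eval_eq' ![x, y], Finset.mul_sum]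
  refine Finset.sum_congr rfl fun d hd => ?_
  obtain ⟨k, rfl⟩ := Nat.exists_eq_add_of_le (exponent_le hdeg hd)
  simp only [map_mul, map_pow, eval_C, hU, hV, Fin.prod_univ_two, Matrix.cons_val_zero,
    Matrix.cons_val_one, Nat.add_sub_cancel_left]
  ring

/-- The polynomial `|c z + e|²` in the real coordinates of `z`. -/
noncomputable def normSqPoly (c e : ℂ) : MvPolynomial (Fin 2) ℝ :=
  lin c.re (-c.im) e.re * lin c.re (-c.im) e.re + lin c.im c.re e.im * lin c.im c.re e.im

lemma eval_normSqPoly (c e z : ℂ) :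
    eval ![z.re, z.im] (normSqPoly c e) = Complex.normSq (c * z + e) := by
  simp only [normSqPoly, map_add, map_mul, eval_lin, Complex.normSq_apply, Complex.add_re,
    Complex.add_im, Complex.mul_re, Complex.mul_im]
  ring

lemma totalDegree_normSqPoly (c e : ℂ) : (normSqPoly c e).totalDegree ≤ 2 :=
  (totalDegree_add _ _).trans (max_le (totalDegree_lin_mul ..) (totalDegree_lin_mul ..))

/-- The real part of `(p z + q) * conj (c z + e)`, in the real coordinates of `z`. -/
noncomputable def rePoly (p q c e : ℂ) : MvPolynomial (Fin 2) ℝ :=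
  lin p.re (-p.im) q.re * lin c.re (-c.im) e.re + lin p.im p.re q.im * lin c.im c.re e.im

/-- The imaginary part of `(p z + q) * conj (c z + e)`, in the real coordinates of `z`. -/
noncomputable def imPoly (p q c e : ℂ) : MvPolynomial (Fin 2) ℝ :=
  lin p.im p.re q.im * lin c.re (-c.im) e.re - lin p.re (-p.im) q.re * lin c.im c.re e.im

lemma totalDegree_rePoly (p q c e : ℂ) : (rePoly p q c e).totalDegree ≤ 2 :=
  (totalDegree_add _ _).trans (max_le (totalDegree_lin_mul ..) (totalDegree_lin_mul ..))

lemma totalDegree_imPoly (p q c e : ℂ) : (imPoly p q c e).totalDegree ≤ 2 :=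
  (totalDegree_sub _ _).trans (max_le (totalDegree_lin_mul ..) (totalDegree_lin_mul ..))

lemma eval_rePoly {p q c e w z : ℂ} (h : p * w + q = (c * w + e) * z) :
    eval ![w.re, w.im] (rePoly p q c e) = eval ![w.re, w.im] (normSqPoly c e) * z.re := by
  have h1 := congrArg Complex.re h
  have h2 := congrArg Complex.im h
  simp only [Complex.add_re, Complex.add_im, Complex.mul_re, Complex.mul_im] at h1 h2
  simp only [rePoly, normSqPoly, map_add, map_mul, eval_lin]
  linear_combination (c.re * w.re - c.im * w.im + e.re) * h1 +
    (c.im * w.re + c.re * w.im + e.im) * h2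

lemma eval_imPoly {p q c e w z : ℂ} (h : p * w + q = (c * w + e) * z) :
    eval ![w.re, w.im] (imPoly p q c e) = eval ![w.re, w.im] (normSqPoly c e) * z.im := by
  have h1 := congrArg Complex.re h
  have h2 := congrArg Complex.im h
  simp only [Complex.add_re, Complex.add_im, Complex.mul_re, Complex.mul_im] at h1 h2
  simp only [imPoly, normSqPoly, map_add, map_sub, map_mul, eval_lin]
  linear_combination (c.re * w.re - c.im * w.im + e.re) * h2 -
    (c.im * w.re + c.re * w.im + e.im) * h1

lemma normSqPoly_ne_zero {c e : ℂ} (h : c ≠ 0 ∨ e ≠ 0) : normSqPoly c e ≠ 0 := by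
  intro h0
  have key (z : ℂ) : c * z + e = 0 := by
    rw [← Complex.normSq_eq_zero, ← eval_normSqPoly, h0, map_zero]
  have he : e = 0 := by simpa using key 0
  have hc : c = 0 := by simpa [he] using key 1
  exact h.elim (· hc) (· he)

end MobiusCurve

open MobiusCurve in
/-- Möbius transformations send real algebraic curves to real algebraic curves,
with at most a doubling of the degree. -/
theorem mobius_algebraic_curve (m : ℕ) (hm : 1 ≤ m)
    (P : MvPolynomial (Fin 2) ℝ) (hP : P ≠ 0) (hdeg : P.totalDegree ≤ m)
    (a b c e : ℂ) (hD : a * e - b * c ≠ 0) :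
    ∃ Q : MvPolynomial (Fin 2) ℝ, Q ≠ 0 ∧ Q.totalDegree ≤ 2 * m ∧
      ∀ z : ℂ, c * z + e ≠ 0 →
        MvPolynomial.eval ![z.re, z.im] P = 0 →
        MvPolynomial.eval
          ![((a * z + b) / (c * z + e)).re, ((a * z + b) / (c * z + e)).im] Q = 0 := by
  have key (z : ℂ) (hz : c * z + e ≠ 0) :
      MvPolynomial.eval ![((a * z + b) / (c * z + e)).re, ((a * z + b) / (c * z + e)).im]
        (clearDenom m P (rePoly e (-b) (-c) a) (imPoly e (-b) (-c) a) (normSqPoly (-c) a)) =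
      Complex.normSq (-c * ((a * z + b) / (c * z + e)) + a) ^ m *
        MvPolynomial.eval ![z.re, z.im] P := by
    have h : e * ((a * z + b) / (c * z + e)) + -b =
        (-c * ((a * z + b) / (c * z + e)) + a) * z := by
      linear_combination div_mul_cancel₀ (a * z + b) hz
    rw [eval_clearDenom hdeg _ z.re z.im (eval_rePoly h) (eval_imPoly h), eval_normSqPoly]
  refine ⟨_, fun hQ => ?_, totalDegree_clearDenom hdeg (totalDegree_rePoly e (-b) (-c) a)
    (totalDegree_imPoly e (-b) (-c) a) (totalDegree_normSqPoly (-c) a), fun z hz hPz => ?_⟩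
  · have hce : c ≠ 0 ∨ e ≠ 0 := by
      by_contra! h
      exact hD (by simp [h.1, h.2])
    refine mul_ne_zero hP (normSqPoly_ne_zero hce) (MvPolynomial.funext fun v => ?_)
    have hv : v = ![(⟨v 0, v 1⟩ : ℂ).re, (⟨v 0, v 1⟩ : ℂ).im] := by
      ext i; fin_cases i <;> rfl
    rw [hv, map_mul, map_zero, eval_normSqPoly]
    generalize (⟨v 0, v 1⟩ : ℂ) = z
    by_cases hz : c * z + e = 0
    · simp [hz]
    have hw : -c * ((a * z + b) / (c * z + e)) + a ≠ 0 := by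
      have : -c * ((a * z + b) / (c * z + e)) + a = (a * e - b * c) / (c * z + e) := by
        rw [eq_div_iff hz]
        linear_combination (-c) * div_mul_cancel₀ (a * z + b) hz
      rw [this]
      exact div_ne_zero hD hz
    have h := key z hz
    rw [hQ, map_zero] at h
    have hPz := (mul_eq_zero.mp h.symm).resolve_left
      (pow_ne_zero m (mt Complex.normSq_eq_zero.mp hw))
    rw [hPz, zero_mul]
  · rw [key z hz, hPz, mul_zero]
end

section
/- Let u, v ∈ ℝ with u ≠ v, u ≠ −3, and v ≠ −3. Then (u² − 4)/(u/3 + 1) = (v² − 4)/(v/3 + 1) if and only if v = −(3u + 4)/(u + 3). -/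
/-- The half-return map of the lower system: for `u ≠ v`, `u ≠ -3`, `v ≠ -3`,
the level-set equation `(u²-4)/(u/3+1) = (v²-4)/(v/3+1)` holds iff
`v = -(3u+4)/(u+3)`. -/
theorem half_return_map (u v : ℝ) (huv : u ≠ v) (hu : u ≠ -3) (hv : v ≠ -3) :
    (u ^ 2 - 4) / (u / 3 + 1) = (v ^ 2 - 4) / (v / 3 + 1) ↔
      v = -(3 * u + 4) / (u + 3) := by
  have hu3 : u + 3 ≠ 0 := fun h => hu (by linarith)
  have hu1 : u / 3 + 1 ≠ 0 := fun h => hu (by linarith)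
  have hv1 : v / 3 + 1 ≠ 0 := fun h => hv (by linarith)
  rw [div_eq_div_iff hu1 hv1, eq_div_iff hu3]
  constructor
  · intro h
    -- Clearing denominators, the difference of the two sides is divisible by `u - v`.
    have key : (u - v) * (u * v + 3 * u + 3 * v + 4) = 0 := by linear_combination 3 * h
    have h0 := (mul_eq_zero.mp key).resolve_left (sub_ne_zero.mpr huv)
    linear_combination h0
  · intro h
    linear_combination (u - v) / 3 * h
end

section
/- Define u(x,y) = 3 − y − (3/4)x² + (3/4)y² − (1/3)xy and v(x,y) = 2/3 + x + (1/6)x² − (1/6)y² − (3/2)xy. Define S(x,y) = x² + y² − 4, L(x,y) = (1/3)x − (3/2)y + 1, and K(x,y) = −((3/2)x + (1/3)y). Then for every (x,y) ∈ ℝ²: 2x·u(x,y) + 2y·v(x,y) = K(x,y)·S(x,y) and (1/3)·u(x,y) − (3/2)·v(x,y) = K(x,y)·L(x,y). Consequently, along any differentiable solution (x(t), y(t)) of ẋ = u(x,y), ẏ = v(x,y) with L(x(t), y(t)) ≠ 0, the function H = S/L is constant. -/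
/-!
The two cofactor identities are polynomial identities. Along a solution they say that `S` and `L`
satisfy the same linear scalar equation `ż = K z`, so the numerator `S' L - S L'` of the derivative
of `S / L` is `K S L - S K L = 0`. A function with zero derivative on a convex set is constant there
(`div_eq_of_common_cofactor`).
-/

/-- Two functions satisfying the same linear equation `ż = k z` on a convex set have a constant
ratio, as long as the denominator does not vanish. -/
lemma div_eq_of_common_cofactor {s : Set ℝ} (hs : Convex ℝ s) {S L k : ℝ → ℝ}
    (hS : ∀ t ∈ s, HasDerivAt S (k t * S t) t) (hL : ∀ t ∈ s, HasDerivAt L (k t * L t) t)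
    (hL0 : ∀ t ∈ s, L t ≠ 0) {t₁ t₂ : ℝ} (h₁ : t₁ ∈ s) (h₂ : t₂ ∈ s) :
    S t₁ / L t₁ = S t₂ / L t₂ := by
  have hderiv : ∀ t ∈ s, HasDerivWithinAt (fun t => S t / L t) 0 s t := by
    intro t ht
    have h := ((hS t ht).fun_div (hL t ht) (hL0 t ht)).hasDerivWithinAt (s := s)
    have hnum : k t * S t * L t - S t * (k t * L t) = 0 := by ring
    rwa [hnum, zero_div] at h
  -- The mean value inequality with Lipschitz constant `0`.
  have hle := hs.norm_image_sub_le_of_norm_hasDerivWithin_le (C := 0) hderiv (by simp) h₂ h₁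
  rw [zero_mul, norm_le_zero_iff, sub_eq_zero] at hle
  exact hle

/-- Darboux structure of the lower-half-plane field: the circle `S = x²+y²-4`
and the line `L = x/3 - 3y/2 + 1` are invariant algebraic curves with the
common cofactor `K = -(3x/2 + y/3)`, hence `H = S/L` is a first integral. -/
theorem darboux_first_integral :
    (∀ x y : ℝ,
      2 * x * (3 - y - (3 / 4) * x ^ 2 + (3 / 4) * y ^ 2 - (1 / 3) * x * y)
          + 2 * y * (2 / 3 + x + (1 / 6) * x ^ 2 - (1 / 6) * y ^ 2 - (3 / 2) * x * y)
        = (-((3 / 2) * x + (1 / 3) * y)) * (x ^ 2 + y ^ 2 - 4) ∧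
      (1 / 3) * (3 - y - (3 / 4) * x ^ 2 + (3 / 4) * y ^ 2 - (1 / 3) * x * y)
          - (3 / 2) * (2 / 3 + x + (1 / 6) * x ^ 2 - (1 / 6) * y ^ 2 - (3 / 2) * x * y)
        = (-((3 / 2) * x + (1 / 3) * y)) * ((1 / 3) * x - (3 / 2) * y + 1)) ∧
    ∀ (s : Set ℝ), Convex ℝ s → ∀ (x y : ℝ → ℝ),
      (∀ t ∈ s, HasDerivAt x
        (3 - y t - (3 / 4) * (x t) ^ 2 + (3 / 4) * (y t) ^ 2 - (1 / 3) * x t * y t) t) →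
      (∀ t ∈ s, HasDerivAt y
        (2 / 3 + x t + (1 / 6) * (x t) ^ 2 - (1 / 6) * (y t) ^ 2 - (3 / 2) * x t * y t) t) →
      (∀ t ∈ s, (1 / 3) * x t - (3 / 2) * y t + 1 ≠ 0) →
      ∀ t₁ ∈ s, ∀ t₂ ∈ s,
        ((x t₁) ^ 2 + (y t₁) ^ 2 - 4) / ((1 / 3) * x t₁ - (3 / 2) * y t₁ + 1)
          = ((x t₂) ^ 2 + (y t₂) ^ 2 - 4) / ((1 / 3) * x t₂ - (3 / 2) * y t₂ + 1) := by
  refine ⟨fun x y => ⟨by ring, by ring⟩, ?_⟩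
  intro s hs x y hx hy hL0 t₁ h₁ t₂ h₂
  refine div_eq_of_common_cofactor hs
    (S := fun t => (x t) ^ 2 + (y t) ^ 2 - 4)
    (L := fun t => (1 / 3) * x t - (3 / 2) * y t + 1)
    (k := fun t => -((3 / 2) * x t + (1 / 3) * y t)) ?_ ?_ hL0 h₁ h₂
  · intro t ht
    refine ((((hx t ht).fun_pow 2).fun_add ((hy t ht).fun_pow 2)).sub_const 4).congr_deriv ?_
    push_cast
    ring
  · intro t ht
    refine ((((hx t ht).const_mul (1 / 3)).fun_sub
      ((hy t ht).const_mul (3 / 2))).add_const 1).congr_deriv ?_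
    ring
end
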